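/- Let d ≥ 1, let ω ∈ ℝ^d be nonresonant, let f : ℝ^d → ℝ be real analytic and 2π-periodic in each coordinate with mean value f₀, let g : ℝ → ℝ be real analytic, and let c₀ ∈ ℝ be a simple zero of g(x) − f₀ (i.e. g(c₀) = f₀ and g'(c₀) ≠ 0). Then there exists ε₀ > 0 such that for every ε with 0 < |ε| < ε₀ there is a function X_ε : ℝ^d → ℝ, real analytic and 2π-periodic in each coordinate, such that the function x(t) = c₀ + X_ε(ωt) satisfies ε x''(t) + x'(t) + ε g(x(t)) = ε f(ωt) for all t ∈ ℝ; moreover sup_{ψ∈ℝ^d} |X_ε(ψ)| → 0 as ε → 0. -/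

import Mathlib

open MeasureTheory Filter

/-!
Subtracting the linearization at `c₀`, the equation for `u = x - c₀` along the flow `t ↦ ωt` reads
`ε u'' + u' + ε a u = ε (f - f₀ - N u)` with `a = g'(c₀) ≠ 0` and `N` of second order. For small `ε`
the left-hand side factors as `ε a (1 + σ d/dt) (1 + τ d/dt)` with real `σ`, `τ`, and each factor is
inverted on continuous functions on the torus by an exponentially weighted average along the flow.
So there are no small divisors: the inverse `T` satisfies `‖T‖ ≤ 1 / |a|` for every `ω`.

As `ε → 0`, `|τ| → ∞`, so by equidistribution of the flow the average of `f - f₀` tends uniformly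
to zero. Hence `u + T (N u) = T (f - f₀)` is a small perturbation of the identity and has a small
continuous solution.

Analyticity of `u` uses translation invariance. A continuous function on the torus is analytic if
and only if its translates form an analytic family of elements of the Banach space of continuous
functions. The map `u ↦ u + T (N u)` commutes with translations and is analytic with invertible
derivative, so the inverse function theorem transfers analyticity from `T (f - f₀)` to `u`.
-/

open scoped Topology NNReal ENNReal

section TaylorSeries

variable {𝕜 E F : Type*} [RCLike 𝕜] [NormedAddCommGroup E] [NormedSpace 𝕜 E]
  [NormedAddCommGroup F] [NormedSpace 𝕜 F]

variable (𝕜) in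
/-- The Taylor series of `f` at `x`, whose coefficients are the symmetric multilinear maps
`Dⁿf(x) / n!`. Unlike an arbitrary power series of `f`, it is determined by the germ of `f`, hence
inherits every symmetry of `f`. -/
noncomputable def taylorSeries (f : E → F) (x : E) : FormalMultilinearSeries 𝕜 E F :=
  fun n => (n.factorial : 𝕜)⁻¹ • iteratedFDeriv 𝕜 n f x

/-- `f` is the sum of the power series `p` on the ball of radius `r` about `x`, and `p` satisfies
the Cauchy estimates with constant `C` there. -/
structure HasBoundedFPowerSeriesOnBall (f : E → F) (p : FormalMultilinearSeries 𝕜 E F) (x : E)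
    (r : ℝ≥0) (C : ℝ) : Prop where
  hasFPowerSeriesOnBall : HasFPowerSeriesOnBall f p x r
  norm_mul_pow_le : ∀ n, ‖p n‖ * r ^ n ≤ C

theorem HasBoundedFPowerSeriesOnBall.mono {f : E → F} {p : FormalMultilinearSeries 𝕜 E F} {x : E}
    {r r' : ℝ≥0} {C C' : ℝ} (h : HasBoundedFPowerSeriesOnBall f p x r C) (hr' : 0 < r')
    (hr : r' ≤ r) (hC : C ≤ C') : HasBoundedFPowerSeriesOnBall f p x r' C' where
  hasFPowerSeriesOnBall := h.hasFPowerSeriesOnBall.mono (by simpa using hr') (by simpa using hr)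
  norm_mul_pow_le n := (h.norm_mul_pow_le n).trans' (by gcongr) |>.trans hC

theorem taylorSeries_comp_add_right (f : E → F) (a x : E) :
    taylorSeries 𝕜 (fun y => f (y + a)) x = taylorSeries 𝕜 f (x + a) := by
  funext n
  simp only [taylorSeries, iteratedFDeriv_comp_add_right]

theorem continuousAt_taylorSeries {f : E → F} {x : E} [CompleteSpace F] (hf : AnalyticAt 𝕜 f x)
    (n : ℕ) : ContinuousAt (fun y => taylorSeries 𝕜 f y n) x := by
  unfold taylorSeries
  exact (hf.contDiffAt.continuousAt_iteratedFDeriv (n := n) le_rfl).const_smul (n.factorial : 𝕜)⁻¹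

theorem hasBoundedFPowerSeriesOnBall_taylorSeries [CompleteSpace F] {f : E → F}
    {p : FormalMultilinearSeries 𝕜 E F} {x : E} {r : ℝ≥0} {C : ℝ}
    (h : HasBoundedFPowerSeriesOnBall f p x r C) :
    HasBoundedFPowerSeriesOnBall f (taylorSeries 𝕜 f x) x r C := by
  have norm_le (n : ℕ) : ‖taylorSeries 𝕜 f x n‖ ≤ ‖p n‖ := by
    refine ContinuousMultilinearMap.opNorm_le_bound (norm_nonneg _) fun v => ?_
    have symmetrization_le : ‖∑ σ : Equiv.Perm (Fin n), p n (fun i => v (σ i))‖ ≤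
        n.factorial * (‖p n‖ * ∏ i, ‖v i‖) := by
      refine (norm_sum_le_of_le _ fun σ _ => (p n).le_opNorm _).trans_eq ?_
      simp [Equiv.prod_comp _ fun i => ‖v i‖, Fintype.card_perm]
    rw [taylorSeries, smul_apply,
      h.hasFPowerSeriesOnBall.iteratedFDeriv_eq_sum_of_completeSpace, norm_smul, norm_inv,
      RCLike.norm_natCast, inv_mul_le_iff₀ (by positivity)]
    exact symmetrization_le
  have bound (n : ℕ) : ‖taylorSeries 𝕜 f x n‖ * r ^ n ≤ C :=
    (h.norm_mul_pow_le n).trans' (by gcongr; exact norm_le n)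
  exact ⟨⟨(taylorSeries 𝕜 f x).le_radius_of_bound C bound, h.hasFPowerSeriesOnBall.r_pos,
    fun hy => h.hasFPowerSeriesOnBall.hasSum_iteratedFDeriv hy⟩, bound⟩

theorem exists_norm_changeOrigin_mul_pow_le (p : FormalMultilinearSeries 𝕜 E F) {r : ℝ≥0}
    (hr : (r : ℝ≥0∞) + r < p.radius) :
    ∃ C : ℝ, ∀ y : E, ‖y‖₊ ≤ r → ∀ n, ‖p.changeOrigin y n‖ * r ^ n ≤ C := by
  have summable := p.changeOriginSeries_summable_aux₁ hr
  refine ⟨(∑' s : Σ k l : ℕ, { s : Finset (Fin (k + l)) // s.card = l },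
      ‖p (s.1 + s.2.1)‖₊ * r ^ s.2.1 * r ^ s.1 : ℝ≥0), fun y hy n => ?_⟩
  have r_lt : (r : ℝ≥0∞) < p.radius := le_self_add.trans_lt hr
  have y_lt : (‖y‖₊ : ℝ≥0∞) < p.radius := r_lt.trans_le' (by simpa using hy)
  have summable_sigma := NNReal.summable_sigma.1 summable
  norm_cast
  calc ‖p.changeOrigin y n‖₊ * r ^ n
      ≤ (∑' s : Σ l : ℕ, { s : Finset (Fin (n + l)) // s.card = l },
          ‖p (n + s.1)‖₊ * r ^ s.1) * r ^ n := by
        gcongr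
        refine (p.nnnorm_changeOrigin_le n y_lt).trans ?_
        exact (p.changeOriginSeries_summable_aux₂ y_lt n).tsum_le_tsum (fun s => by gcongr)
          (p.changeOriginSeries_summable_aux₂ r_lt n)
    _ = ∑' s : Σ l : ℕ, { s : Finset (Fin (n + l)) // s.card = l },
          ‖p (n + s.1)‖₊ * r ^ s.1 * r ^ n := by rw [NNReal.tsum_mul_right]
    _ ≤ _ := by
        rw [summable.tsum_sigma' summable_sigma.1]
        exact summable_sigma.2.le_tsum n fun _ _ => zero_le

theorem exists_hasBoundedFPowerSeriesOnBall_taylorSeries [CompleteSpace F] {f : E → F} {x₀ : E}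
    (hf : AnalyticAt 𝕜 f x₀) : ∃ r > 0, ∃ C, ∀ᶠ x in 𝓝 x₀,
      HasBoundedFPowerSeriesOnBall f (taylorSeries 𝕜 f x) x r C := by
  obtain ⟨p, R, hp⟩ := hf
  obtain ⟨s, s_pos, s_lt⟩ := ENNReal.lt_iff_exists_nnreal_btwn.1 hp.r_pos
  obtain ⟨r, r_pos, r_add_r⟩ : ∃ r : ℝ≥0, 0 < r ∧ r + r = s :=
    ⟨s / 2, by simpa using s_pos, add_halves s⟩
  have r_add_r_lt : (r : ℝ≥0∞) + r < R := by rwa [← ENNReal.coe_add, r_add_r]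
  obtain ⟨C, hC⟩ := exists_norm_changeOrigin_mul_pow_le p (r_add_r_lt.trans_le hp.r_le)
  refine ⟨r, r_pos, C, ?_⟩
  filter_upwards [Metric.closedBall_mem_nhds x₀ (NNReal.coe_pos.2 r_pos)] with x hx
  have hy : ‖x - x₀‖₊ ≤ r := by
    rwa [mem_closedBall_iff_norm, ← coe_nnnorm, NNReal.coe_le_coe] at hx
  have hy' : (‖x - x₀‖₊ : ℝ≥0∞) ≤ r := by exact_mod_cast hy
  have expansion := hp.changeOrigin (hy'.trans_lt (le_self_add.trans_lt r_add_r_lt))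
  rw [add_sub_cancel] at expansion
  refine hasBoundedFPowerSeriesOnBall_taylorSeries ⟨expansion.mono (by simpa) ?_, hC _ hy⟩
  exact ENNReal.le_sub_of_add_le_left ENNReal.coe_ne_top ((by gcongr : _ ≤ _).trans r_add_r_lt.le)

end TaylorSeries

section ContinuousMapValued

variable {𝕜 E F K : Type*} [RCLike 𝕜] [NormedAddCommGroup E] [NormedSpace 𝕜 E]
  [NormedAddCommGroup F] [NormedSpace 𝕜 F] [TopologicalSpace K] [CompactSpace K]

theorem HasBoundedFPowerSeriesOnBall.comp_eval {g : E → F} {p : FormalMultilinearSeries 𝕜 E F}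
    {u : C(K, E)} {k : K} {r : ℝ≥0} {C : ℝ} (h : HasBoundedFPowerSeriesOnBall g p (u k) r C) :
    HasBoundedFPowerSeriesOnBall (fun v : C(K, E) => g (v k))
      (p.compContinuousLinearMap (ContinuousMap.evalCLM 𝕜 k)) u r C := by
  have norm_eval_le : ‖(ContinuousMap.evalCLM 𝕜 k : C(K, E) →L[𝕜] E)‖ ≤ 1 :=
    ContinuousLinearMap.opNorm_le_bound _ zero_le_one fun v => by
      simpa using v.norm_coe_le_norm k
  have bound (n : ℕ) : ‖p.compContinuousLinearMap (ContinuousMap.evalCLM 𝕜 k) n‖ * r ^ n ≤ C := by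
    refine (h.norm_mul_pow_le n).trans' ?_
    gcongr
    refine ((p n).norm_compContinuousLinearMap_le _).trans ?_
    exact mul_le_of_le_one_right (norm_nonneg _)
      (Finset.prod_le_one (fun _ _ => norm_nonneg _) fun _ _ => norm_eval_le)
  refine ⟨⟨FormalMultilinearSeries.le_radius_of_bound _ C bound,
    h.hasFPowerSeriesOnBall.r_pos, fun {v} hv => ?_⟩, bound⟩
  refine h.hasFPowerSeriesOnBall.hasSum (y := v k) ?_
  rw [Metric.mem_eball, edist_zero_right] at hv ⊢
  exact hv.trans_le' (enorm_le_iff_norm_le.2 (v.norm_coe_le_norm k))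

variable [CompleteSpace F]

theorem analyticAt_continuousMap_of_uniform {G : E → C(K, F)} {x : E}
    {P : K → FormalMultilinearSeries 𝕜 E F} (hP : ∀ n v, Continuous fun k => P k n v) {r : ℝ≥0}
    {C : ℝ} (hr : 0 < r) (h : ∀ k, HasBoundedFPowerSeriesOnBall (G · k) (P k) x r C) :
    AnalyticAt 𝕜 G x := by
  rcases isEmpty_or_nonempty K with _ | ⟨⟨k₀⟩⟩
  · exact analyticAt_const.congr (.of_forall fun y => Subsingleton.elim (0 : C(K, F)) (G y))
  have C_nonneg : 0 ≤ C := le_trans (by positivity) ((h k₀).norm_mul_pow_le 0)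
  let p : FormalMultilinearSeries 𝕜 E C(K, F) := fun n =>
    MultilinearMap.mkContinuous
      { toFun := fun v => ⟨fun k => P k n v, hP n v⟩
        map_update_add' := fun v i a b => by ext k; simp
        map_update_smul' := fun v i a b => by ext k; simp } (C / r ^ n) fun v => by
      refine (ContinuousMap.norm_le _ (by positivity)).2 fun k => ?_
      exact (P k n).le_of_opNorm_le ((le_div_iff₀ (by positivity)).2 ((h k).norm_mul_pow_le n)) v
  have norm_p_le (n : ℕ) : ‖p n‖ * r ^ n ≤ C :=
    (le_div_iff₀ (by positivity)).1 (MultilinearMap.mkContinuous_norm_le _ (by positivity) _)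
  have r_le : (r : ℝ≥0∞) ≤ p.radius := p.le_radius_of_bound C norm_p_le
  refine ⟨p, r, r_le, by simpa using hr, fun {y} hy => ?_⟩
  have summable : Summable fun n => p n fun _ => y :=
    (p.summable_norm_apply (Metric.eball_subset_eball r_le hy)).of_norm
  have tsum_eq : ∑' n, p n (fun _ => y) = G (x + y) := by
    ext k
    exact (summable.hasSum.mapL (ContinuousMap.evalCLM 𝕜 k)).unique
      ((h k).hasFPowerSeriesOnBall.hasSum hy)
  exact tsum_eq ▸ summable.hasSum

theorem analyticAt_continuousMap {G : E → C(K, F)} {x : E}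
    {P : K → FormalMultilinearSeries 𝕜 E F} (hP : ∀ n v, Continuous fun k => P k n v)
    (h : ∀ k₀, ∃ r > 0, ∃ C, ∀ᶠ k in 𝓝 k₀, HasBoundedFPowerSeriesOnBall (G · k) (P k) x r C) :
    AnalyticAt 𝕜 G x := by
  suffices ∃ r > 0, ∃ C, ∀ k ∈ Set.univ, HasBoundedFPowerSeriesOnBall (G · k) (P k) x r C by
    obtain ⟨r, r_pos, C, bound⟩ := this
    exact analyticAt_continuousMap_of_uniform hP r_pos fun k => bound k trivial
  refine isCompact_univ.induction_on (p := fun S => ∃ r > 0, ∃ C, ∀ k ∈ S,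
    HasBoundedFPowerSeriesOnBall (G · k) (P k) x r C) ⟨1, one_pos, 0, by simp⟩ ?_ ?_ ?_
  · rintro S T hST ⟨r, r_pos, C, bound⟩
    exact ⟨r, r_pos, C, fun k hk => bound k (hST hk)⟩
  · rintro S T ⟨r, r_pos, C, bound⟩ ⟨r', r'_pos, C', bound'⟩
    have min_pos : 0 < min r r' := lt_min r_pos r'_pos
    refine ⟨min r r', min_pos, max C C', fun k hk => hk.elim (fun hk => ?_) fun hk => ?_⟩
    · exact (bound k hk).mono min_pos (min_le_left _ _) (le_max_left _ _)
    · exact (bound' k hk).mono min_pos (min_le_right _ _) (le_max_right _ _)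
  · rintro k -
    obtain ⟨r, r_pos, C, bound⟩ := h k
    exact ⟨_, mem_nhdsWithin_of_mem_nhds bound, r, r_pos, C, fun k hk => hk⟩

theorem analyticAt_continuousMap_comp (g : C(E, F)) (u : C(K, E))
    (hg : ∀ k, AnalyticAt 𝕜 g (u k)) : AnalyticAt 𝕜 (fun v : C(K, E) => g.comp v) u := by
  refine analyticAt_continuousMap (P := fun k =>
    (taylorSeries 𝕜 g (u k)).compContinuousLinearMap (ContinuousMap.evalCLM 𝕜 k)) ?_ fun k₀ => ?_
  · intro n v
    refine continuous_iff_continuousAt.2 fun k => ?_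
    have coeff := (continuousAt_taylorSeries (hg k) n).comp (f := u) u.continuous.continuousAt
    have args : ContinuousAt (fun k i => v i k) k := by fun_prop
    exact coeff.eval args
  · obtain ⟨r, r_pos, C, bound⟩ := exists_hasBoundedFPowerSeriesOnBall_taylorSeries (hg k₀)
    refine ⟨r, r_pos, C, ?_⟩
    filter_upwards [u.continuous.continuousAt.eventually bound] with k hk
    exact hk.comp_eval

end ContinuousMapValued

section NearIdentity

variable {𝕜 B : Type*} [NontriviallyNormedField 𝕜] [NormedAddCommGroup B] [NormedSpace 𝕜 B]
  [CompleteSpace B] {R : B → B} {K : ℝ≥0}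

theorem exists_add_eq_of_lipschitzOnWith [NormedSpace ℝ B] {ρ : ℝ} (hK : K < 1)
    (hR : LipschitzOnWith K R (Metric.closedBall 0 ρ)) (hR₀ : R 0 = 0) {b : B}
    (hb : ‖b‖ ≤ (1 - K) * ρ) : ∃ u, ‖u‖ ≤ ‖b‖ / (1 - K) ∧ u + R u = b := by
  have one_sub_pos : (0 : ℝ) < 1 - K := sub_pos.2 (by exact_mod_cast hK)
  have approx : ApproximatesLinearOn (fun u => u + R u) (.id ℝ B) (Metric.closedBall 0 ρ) K :=
    ApproximatesLinearOn.approximatesLinearOn_iff_lipschitzOnWith.2 (by convert hR; ext; simp)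
  have surj := approx.surjOn_closedBall_of_nonlinearRightInverse (b := 0) (ε := ‖b‖ / (1 - K))
    ⟨id, 1, fun y => by simp, fun y => rfl⟩ (by positivity)
    (Metric.closedBall_subset_closedBall (by rwa [div_le_iff₀' one_sub_pos]))
  obtain ⟨u, hu, hub⟩ := surj (a := b) (by simp [hR₀, mul_div_cancel₀ _ one_sub_pos.ne'])
  exact ⟨u, mem_closedBall_zero_iff.1 hu, hub⟩

theorem exists_hasFDerivAt_equiv_of_lipschitzOnWith {s : Set B} {u : B} (hK : K < 1)
    (hR : LipschitzOnWith K R s) (hs : s ∈ 𝓝 u) (hRu : DifferentiableAt 𝕜 R u) :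
    ∃ e : B ≃L[𝕜] B, HasFDerivAt (fun v => v + R v) (e : B →L[𝕜] B) u := by
  have norm_fderiv_lt : ‖-fderiv 𝕜 R u‖ < 1 :=
    (norm_neg _).trans_lt
      ((norm_fderiv_le_of_lipschitzOn 𝕜 hs hR).trans_lt (by exact_mod_cast hK))
  refine ⟨.unitsEquiv 𝕜 B (Units.oneSub _ norm_fderiv_lt), ?_⟩
  refine ((hasFDerivAt_id u).fun_add hRu.hasFDerivAt).congr_fderiv ?_
  ext v
  simp

end NearIdentity

theorem analyticAt_of_analyticAt_comp {𝕜 E B B' : Type*} [RCLike 𝕜] [NormedAddCommGroup E]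
    [NormedSpace 𝕜 E] [NormedAddCommGroup B] [NormedSpace 𝕜 B] [CompleteSpace B]
    [NormedAddCommGroup B'] [NormedSpace 𝕜 B'] [CompleteSpace B'] {Φ : B → B'} {Φ' : B ≃L[𝕜] B'}
    {γ : E → B} {x : E} (hΦ : AnalyticAt 𝕜 Φ (γ x)) (hΦ' : HasFDerivAt Φ (Φ' : B →L[𝕜] B') (γ x))
    (hγ : ContinuousAt γ x) (h : AnalyticAt 𝕜 (fun y => Φ (γ y)) x) : AnalyticAt 𝕜 γ x := by
  have top_ne_zero : (⊤ : WithTop ℕ∞) ≠ 0 := by simp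
  have left_inverse := (hΦ.contDiffAt.hasStrictFDerivAt' hΦ' top_ne_zero).eventually_left_inverse
  refine AnalyticAt.congr
    ((hΦ.contDiffAt.to_localInverse hΦ' top_ne_zero).analyticAt.comp_of_eq h rfl) ?_
  exact hγ.eventually left_inverse

section Translation

variable {𝕜 E F K : Type*} [RCLike 𝕜] [NormedAddCommGroup E] [NormedSpace 𝕜 E]
  [NormedAddCommGroup F] [NormedSpace 𝕜 F] [TopologicalSpace K] [AddGroup K] [ContinuousAdd K]

/-- The translate `x ↦ u (x + k)` of a continuous function `u` on a topological group. -/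
def addTranslate (k : K) (u : C(K, F)) : C(K, F) := u.comp (ContinuousMap.addRight k)

@[simp]
theorem addTranslate_apply (k : K) (u : C(K, F)) (x : K) : addTranslate k u x = u (x + k) := rfl

@[simp]
theorem addTranslate_zero (u : C(K, F)) : addTranslate 0 u = u := by
  ext x
  simp

theorem continuous_addTranslate (u : C(K, F)) : Continuous fun k : K => addTranslate k u :=
  ContinuousMap.continuous_of_continuous_uncurry _
    (by simpa only [Function.uncurry_def, addTranslate_apply] using by fun_prop)

variable [CompactSpace K] {q : E →+ K}

theorem analyticAt_comp_of_analyticAt_addTranslate {u : C(K, F)}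
    (hu : AnalyticAt 𝕜 (fun h => addTranslate (q h) u) 0) (x : E) :
    AnalyticAt 𝕜 (fun y => u (q y)) x := by
  have shifted : AnalyticAt 𝕜 (fun y => addTranslate (q (y - x)) u) x :=
    hu.comp_of_eq (analyticAt_id.sub analyticAt_const) (sub_self x)
  convert! (ContinuousMap.evalCLM 𝕜 (q x)).analyticAt _ |>.comp shifted with y
  change u (q y) = u (q x + q (y - x))
  rw [← map_add, add_sub_cancel]

variable [CompleteSpace F]

theorem analyticAt_addTranslate (hq : IsOpenQuotientMap q) {u : C(K, F)}
    (hu : ∀ x, AnalyticAt 𝕜 (fun y => u (q y)) x) :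
    AnalyticAt 𝕜 (fun h => addTranslate (q h) u) 0 := by
  let P (k : K) : FormalMultilinearSeries 𝕜 E F :=
    taylorSeries 𝕜 (fun y => u (q y)) (Function.surjInv hq.surjective k)
  have P_apply (x : E) : P (q x) = taylorSeries 𝕜 (fun y => u (q y)) x := by
    have q_sub : q (x - Function.surjInv hq.surjective (q x)) = 0 := by
      rw [map_sub, Function.surjInv_eq hq.surjective, sub_self]
    simpa [q_sub] using (taylorSeries_comp_add_right (𝕜 := 𝕜) (fun y => u (q y))
      (x - Function.surjInv hq.surjective (q x)) (Function.surjInv hq.surjective (q x)))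
  refine analyticAt_continuousMap (P := P) (fun n v => ?_) fun k₀ => ?_
  · refine hq.isQuotientMap.continuous_iff.2 (continuous_iff_continuousAt.2 fun x => ?_)
    simpa only [Function.comp_def, P_apply] using!
      (continuousAt_taylorSeries (hu x) n).eval_const v
  · obtain ⟨x₀, rfl⟩ := hq.surjective k₀
    obtain ⟨r, r_pos, C, bound⟩ := exists_hasBoundedFPowerSeriesOnBall_taylorSeries (hu x₀)
    refine ⟨r, r_pos, C, hq.isOpenMap.nhds_le x₀ (bound.mono fun x hx => ?_)⟩
    refine ⟨?_, by simpa only [P_apply] using hx.norm_mul_pow_le⟩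
    simpa [P_apply, add_comm] using hx.hasFPowerSeriesOnBall.comp_sub (-x)

/-- The translates of `u` are the image of the analytic family of translates of `Φ u` under the
local inverse of `Φ`. -/
theorem analyticAt_comp_of_equivariant (hq : IsOpenQuotientMap q) {Φ : C(K, F) → C(K, F)}
    (hΦ : ∀ k v, Φ (addTranslate k v) = addTranslate k (Φ v)) {u : C(K, F)} (hΦu : AnalyticAt 𝕜 Φ u)
    {Φ' : C(K, F) ≃L[𝕜] C(K, F)} (hΦ' : HasFDerivAt Φ (Φ' : C(K, F) →L[𝕜] C(K, F)) u)
    (hu : ∀ x, AnalyticAt 𝕜 (fun y => Φ u (q y)) x) (x : E) :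
    AnalyticAt 𝕜 (fun y => u (q y)) x := by
  have addTranslate_q_zero : addTranslate (q 0) u = u := by rw [map_zero, addTranslate_zero]
  refine analyticAt_comp_of_analyticAt_addTranslate ?_ x
  refine analyticAt_of_analyticAt_comp (Φ := Φ) (Φ' := Φ') ?_ ?_ ?_ ?_
  · rwa [addTranslate_q_zero]
  · rwa [addTranslate_q_zero]
  · exact ((continuous_addTranslate u).comp hq.continuous).continuousAt
  · simpa only [hΦ] using analyticAt_addTranslate hq hu

end Translation

section NonlinearRemainder

variable {𝕜 K : Type*} [RCLike 𝕜] [TopologicalSpace K]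

/-- The Nemytskii operator of the second-order remainder of `g` at `c`, that is
`u ↦ g (c + u) - g c - g' c * u`. -/
noncomputable def nonlinearRemainder (g : C(𝕜, 𝕜)) (c : 𝕜) (u : C(K, 𝕜)) : C(K, 𝕜) :=
  g.comp (.const K c + u) - .const K (g c) - deriv g c • u

theorem nonlinearRemainder_apply (g : C(𝕜, 𝕜)) (c : 𝕜) (u : C(K, 𝕜)) (k : K) :
    nonlinearRemainder g c u k = g (c + u k) - g c - deriv g c * u k := rfl

theorem nonlinearRemainder_zero (g : C(𝕜, 𝕜)) (c : 𝕜) :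
    nonlinearRemainder g c (0 : C(K, 𝕜)) = 0 := by
  ext k
  simp [nonlinearRemainder_apply]

theorem nonlinearRemainder_addTranslate [AddGroup K] [ContinuousAdd K] (g : C(𝕜, 𝕜)) (c : 𝕜)
    (k : K) (u : C(K, 𝕜)) :
    nonlinearRemainder g c (addTranslate k u) = addTranslate k (nonlinearRemainder g c u) := rfl

variable [CompactSpace K] {g : C(𝕜, 𝕜)} {c : 𝕜}

theorem analyticAt_nonlinearRemainder (hg : AnalyticAt 𝕜 g c) :
    AnalyticAt 𝕜 (nonlinearRemainder (K := K) g c) 0 := by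
  have shift : AnalyticAt 𝕜 (fun u : C(K, 𝕜) => .const K c + u) 0 :=
    analyticAt_const.add analyticAt_id
  have comp : AnalyticAt 𝕜 (fun u : C(K, 𝕜) => g.comp (.const K c + u)) 0 :=
    (analyticAt_continuousMap_comp g (.const K c + 0) fun k => by simpa using hg).comp shift
  exact (comp.sub analyticAt_const).sub (analyticAt_id.fun_const_smul (c := deriv g c))

theorem hasStrictFDerivAt_nonlinearRemainder (hg : AnalyticAt 𝕜 g c) :
    HasStrictFDerivAt (nonlinearRemainder (K := K) g c) (0 : C(K, 𝕜) →L[𝕜] C(K, 𝕜)) 0 := by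
  have analytic := analyticAt_nonlinearRemainder (K := K) hg
  suffices fderiv 𝕜 (nonlinearRemainder (K := K) g c) 0 = 0 from
    this ▸ analytic.hasStrictFDerivAt
  ext v k
  have eval_deriv (u : C(K, 𝕜)) : HasFDerivAt (ContinuousMap.evalCLM 𝕜 k : C(K, 𝕜) →L[𝕜] 𝕜)
      (ContinuousMap.evalCLM 𝕜 k) u := ContinuousLinearMap.hasFDerivAt _
  have g_deriv : HasDerivAt g (deriv g c) (c + (0 : C(K, 𝕜)) k) := by
    simpa using hg.differentiableAt.hasDerivAt
  have pointwise_deriv := ((g_deriv.comp_hasFDerivAt (0 : C(K, 𝕜))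
    ((eval_deriv 0).const_add c)).sub_const (g c)).sub ((eval_deriv 0).const_mul (deriv g c))
  have derivs_eq := ((eval_deriv _).comp 0 analytic.differentiableAt.hasFDerivAt).unique
    pointwise_deriv
  simpa using DFunLike.congr_fun derivs_eq v

theorem exists_lipschitzOnWith_nonlinearRemainder (hg : AnalyticAt 𝕜 g c) {η : ℝ≥0} (hη : 0 < η) :
    ∃ ρ > 0, LipschitzOnWith η (nonlinearRemainder (K := K) g c) (Metric.closedBall 0 ρ) ∧
      ∀ u ∈ Metric.closedBall 0 ρ, AnalyticAt 𝕜 (nonlinearRemainder (K := K) g c) u := by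
  obtain ⟨s, hs, lipschitz⟩ := (hasStrictFDerivAt_nonlinearRemainder (K := K)
    hg).exists_lipschitzOnWith_of_nnnorm_lt η (by simpa using hη)
  have analytic := (analyticAt_nonlinearRemainder (K := K) hg).eventually_analyticAt
  obtain ⟨ρ, ρ_pos, hρ⟩ := Metric.nhds_basis_closedBall.mem_iff.1 (inter_mem hs analytic)
  exact ⟨ρ, ρ_pos, lipschitz.mono fun u hu => (hρ hu).1, fun u hu => (hρ hu).2⟩

end NonlinearRemainder

section TranslationAverage

variable {𝕜 K : Type*} [RCLike 𝕜] [TopologicalSpace K] [CompactSpace K] [AddCommGroup K]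
  [ContinuousAdd K] [MeasurableSpace K]

theorem norm_integral_addTranslate_le (μ : Measure K) [IsProbabilityMeasure μ]
    (P : C(K, 𝕜)) : ‖∫ k, addTranslate k P ∂μ‖ ≤ ‖P‖ := by
  simpa using norm_integral_le_of_norm_le_const (μ := μ) (ae_of_all μ fun k =>
    (ContinuousMap.norm_le (addTranslate k P) (norm_nonneg P)).2 fun _ => P.norm_coe_le_norm _)

variable [OpensMeasurableSpace K]

theorem integrable_addTranslate (μ : Measure K) [IsFiniteMeasure μ] (P : C(K, 𝕜)) :
    Integrable (fun k => addTranslate k P) μ :=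
  (continuous_addTranslate P).integrable_of_hasCompactSupport (.of_compactSpace _)

variable (μ : Measure K) [IsProbabilityMeasure μ]

/-- The average `x ↦ ∫ P (x + k) ∂μ(k)` of the translates of `P` over a probability measure `μ`
on a compact group, as an operator on continuous functions. -/
noncomputable def translationAverage : C(K, 𝕜) →L[𝕜] C(K, 𝕜) :=
  LinearMap.mkContinuous
    { toFun P := ∫ k, addTranslate k P ∂μ
      map_add' P Q := integral_add (integrable_addTranslate μ P) (integrable_addTranslate μ Q)
      map_smul' a P := integral_smul a fun k => addTranslate k P }
    1 fun P => (norm_integral_addTranslate_le μ P).trans_eq (one_mul _).symm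

theorem translationAverage_apply (P : C(K, 𝕜)) (x : K) :
    translationAverage μ P x = ∫ k, P (x + k) ∂μ :=
  ContinuousMap.integral_apply (integrable_addTranslate μ P) x

theorem norm_translationAverage_le : ‖(translationAverage μ : C(K, 𝕜) →L[𝕜] C(K, 𝕜))‖ ≤ 1 :=
  LinearMap.mkContinuous_norm_le _ zero_le_one _

theorem norm_translationAverage_apply_le (P : C(K, 𝕜)) : ‖translationAverage μ P‖ ≤ ‖P‖ :=
  norm_integral_addTranslate_le μ P

theorem translationAverage_addTranslate (k : K) (P : C(K, 𝕜)) :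
    translationAverage μ (addTranslate k P) = addTranslate k (translationAverage μ P) := by
  ext x
  simp only [translationAverage_apply, addTranslate_apply, add_right_comm]

theorem translationAverage_const (a : 𝕜) :
    translationAverage μ (.const K a) = .const K a := by
  ext x
  simp [translationAverage_apply]

theorem translationAverage_eq_const [μ.IsAddLeftInvariant] [MeasurableAdd K] (P : C(K, 𝕜)) :
    translationAverage μ P = .const K (∫ k, P k ∂μ) := by
  ext x
  rw [translationAverage_apply, ContinuousMap.const_apply]
  exact integral_add_left_eq_self (fun k => P k) x

theorem translationAverage_clm_comp {𝕜' : Type*} [RCLike 𝕜'] (L : 𝕜 →L[ℝ] 𝕜') (P : C(K, 𝕜)) :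
    translationAverage μ ((L : C(𝕜, 𝕜')).comp P) =
      (L : C(𝕜, 𝕜')).comp (translationAverage μ P) := by
  ext x
  simp only [translationAverage_apply, ContinuousMap.comp_apply]
  exact L.integral_comp_comm ((P.comp (.addLeft x)).continuous.integrable_of_hasCompactSupport
    (.of_compactSpace _))

end TranslationAverage

section ExponentialAverage

open ProbabilityTheory

instance isProbabilityMeasure_expMeasure_one : IsProbabilityMeasure (expMeasure 1) :=
  isProbabilityMeasure_expMeasure one_pos

variable {F : Type*} [NormedAddCommGroup F] [NormedSpace ℝ F]

theorem integral_expMeasure_one (φ : ℝ → F) :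
    ∫ s, φ s ∂expMeasure 1 = ∫ s in Set.Ioi 0, Real.exp (-s) • φ s := by
  have density (s : ℝ) : (exponentialPDF 1 s).toReal = (Set.Ici 0).indicator
      (fun r => Real.exp (-r)) s := by
    rw [exponentialPDF_eq, ENNReal.toReal_ofReal (by positivity)]
    simp [Set.indicator]
  have measurable_density : Measurable (exponentialPDF 1) :=
    (measurable_exponentialPDFReal 1).ennreal_ofReal
  change ∫ s, φ s ∂volume.withDensity (exponentialPDF 1) = _
  rw [integral_withDensity_eq_integral_toReal_smul measurable_density (by simp [exponentialPDF_eq]),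
    ← integral_Ici_eq_integral_Ioi, ← integral_indicator measurableSet_Ici]
  simp only [density, Set.indicator_smul_left]

theorem integral_expMeasure_one_comp_sub (p : ℝ → F) (t : ℝ) :
    ∫ s, p (t - s) ∂expMeasure 1 = Real.exp (-t) • ∫ r in Set.Iic t, Real.exp r • p r := by
  rw [integral_expMeasure_one, ← integral_Ici_eq_integral_Ioi, ← integral_smul,
    ← integral_indicator measurableSet_Iic, ← integral_sub_left_eq_self _ volume t,
    ← integral_indicator measurableSet_Ici]
  refine integral_congr_ae (ae_of_all _ fun s => ?_)
  have exponent_eq : -t + (t - s) = -s := by ring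
  simp [Set.indicator, smul_smul, ← Real.exp_add, exponent_eq]

theorem hasDerivAt_integral_Iic [CompleteSpace F] {φ : ℝ → F} (hφ : Continuous φ)
    (hφi : ∀ r, IntegrableOn φ (Set.Iic r)) (t : ℝ) :
    HasDerivAt (fun t => ∫ r in Set.Iic t, φ r) (φ t) t := by
  have primitive (r : ℝ) :
      ∫ s in Set.Iic r, φ s = (∫ s in Set.Iic 0, φ s) + ∫ s in (0 : ℝ)..r, φ s := by
    rw [← intervalIntegral.integral_Iic_sub_Iic (hφi 0) (hφi r), add_sub_cancel]
  exact ((hφ.integral_hasStrictDerivAt 0 t).hasDerivAt.const_add _).congr_of_eventuallyEq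
    (.of_forall primitive)

theorem hasDerivAt_integral_expMeasure_one_comp_sub [CompleteSpace F] {p : ℝ → F}
    (hp : Continuous p) {C : ℝ} (hC : ∀ r, ‖p r‖ ≤ C) (t : ℝ) :
    HasDerivAt (fun t => ∫ s, p (t - s) ∂expMeasure 1) (p t - ∫ s, p (t - s) ∂expMeasure 1) t := by
  have integrable (r : ℝ) : IntegrableOn (fun r => Real.exp r • p r) (Set.Iic r) :=
    (integrableOn_exp_Iic r).smul_bdd C hp.aestronglyMeasurable (ae_of_all _ hC)
  simp only [integral_expMeasure_one_comp_sub]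
  refine ((hasDerivAt_neg t).exp.smul
    (hasDerivAt_integral_Iic (by fun_prop) integrable t)).congr_deriv ?_
  simp [smul_smul, ← Real.exp_add, sub_eq_add_neg]

theorem hasDerivAt_integral_expMeasure_one_comp_sub_mul [CompleteSpace F] {p : ℝ → F}
    (hp : Continuous p) {C : ℝ} (hC : ∀ r, ‖p r‖ ≤ C) {τ : ℝ} (hτ : τ ≠ 0) (t : ℝ) :
    HasDerivAt (fun t => ∫ s, p (t - τ * s) ∂expMeasure 1)
      (τ⁻¹ • (p t - ∫ s, p (t - τ * s) ∂expMeasure 1)) t := by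
  have rescale (t s : ℝ) : τ * (τ⁻¹ * t - s) = t - τ * s := by
    rw [mul_sub, mul_inv_cancel_left₀ hτ]
  have unit_speed := hasDerivAt_integral_expMeasure_one_comp_sub
    (hp.comp (continuous_const_mul τ)) (fun r => hC (τ * r)) (τ⁻¹ * t)
  simpa [Function.comp_def, rescale, mul_inv_cancel_left₀ hτ] using
    unit_speed.scomp t ((hasDerivAt_id t).const_mul τ⁻¹)

theorem integral_cexp_expMeasure_one (a : ℝ) :
    ∫ s, Complex.exp (a * s * Complex.I) ∂expMeasure 1 = (1 - a * Complex.I)⁻¹ := by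
  rw [integral_expMeasure_one]
  have re_neg : (a * Complex.I - 1).re < 0 := by simp
  have combine (s : ℝ) : Real.exp (-s) • Complex.exp (a * s * Complex.I) =
      Complex.exp ((a * Complex.I - 1) * s) := by
    rw [Complex.real_smul, Complex.ofReal_exp, ← Complex.exp_add]
    push_cast
    ring_nf
  simp only [combine, integral_exp_mul_complex_Ioi re_neg]
  rw [Complex.ofReal_zero, mul_zero, Complex.exp_zero, neg_div, one_div, ← inv_neg, neg_sub]

end ExponentialAverage

section FlowAverage

open ProbabilityTheory

variable {𝕜 K : Type*} [RCLike 𝕜] [TopologicalSpace K] [AddCommGroup K] [MeasurableSpace K]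
  [BorelSpace K]

/-- The law of the point `κ (-τ s)` of a one-parameter subgroup when `s ≥ 0` is a standard
exponential random time. The scale `τ` may be negative. -/
noncomputable def flowMeasure (κ : ℝ →ₜ+ K) (τ : ℝ) : Measure K :=
  (expMeasure 1).map fun s => κ (-(τ * s))

theorem measurable_flow (κ : ℝ →ₜ+ K) (τ : ℝ) : Measurable fun s => κ (-(τ * s)) := by
  have := map_continuous κ
  fun_prop

instance isProbabilityMeasure_flowMeasure (κ : ℝ →ₜ+ K) (τ : ℝ) :
    IsProbabilityMeasure (flowMeasure κ τ) :=
  Measure.isProbabilityMeasure_map (measurable_flow κ τ).aemeasurable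

variable [CompactSpace K]

theorem integral_flowMeasure (κ : ℝ →ₜ+ K) (τ : ℝ) (P : C(K, 𝕜)) :
    ∫ k, P k ∂flowMeasure κ τ = ∫ s, P (κ (-(τ * s))) ∂expMeasure 1 :=
  integral_map (measurable_flow κ τ).aemeasurable
    (P.continuous.integrable_of_hasCompactSupport (.of_compactSpace _)).aestronglyMeasurable

variable [ContinuousAdd K]

/-- The exponentially weighted average of a continuous function over its past (its future if
`τ < 0`) along a one-parameter subgroup. It inverts `1 + τ d/dt`. -/
noncomputable def flowAverage (κ : ℝ →ₜ+ K) (τ : ℝ) : C(K, 𝕜) →L[𝕜] C(K, 𝕜) :=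
  translationAverage (flowMeasure κ τ)

theorem flowAverage_apply (κ : ℝ →ₜ+ K) (τ : ℝ) (P : C(K, 𝕜)) (t : ℝ) :
    flowAverage κ τ P (κ t) = ∫ s, P (κ (t - τ * s)) ∂expMeasure 1 := by
  simp only [flowAverage, translationAverage_apply, sub_eq_add_neg, map_add κ t]
  exact integral_flowMeasure κ τ (P.comp (.addLeft (κ t)))

theorem hasDerivAt_flowAverage (κ : ℝ →ₜ+ K) {τ : ℝ} (hτ : τ ≠ 0) (P : C(K, 𝕜)) (t : ℝ) :
    HasDerivAt (fun t => flowAverage κ τ P (κ t))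
      (τ⁻¹ • (P (κ t) - flowAverage κ τ P (κ t))) t := by
  simp only [flowAverage_apply]
  exact hasDerivAt_integral_expMeasure_one_comp_sub_mul (p := fun t => P (κ t))
    (P.continuous.comp (map_continuous κ)) (fun r => P.norm_coe_le_norm (κ r)) hτ t

theorem smul_deriv_deriv_flowAverage_flowAverage (κ : ℝ →ₜ+ K) {σ τ : ℝ} (hσ : σ ≠ 0)
    (hτ : τ ≠ 0) (P : C(K, 𝕜)) (t : ℝ) :
    (σ * τ) • deriv (deriv fun t => flowAverage κ σ (flowAverage κ τ P) (κ t)) t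
      + (σ + τ) • deriv (fun t => flowAverage κ σ (flowAverage κ τ P) (κ t)) t
      + flowAverage κ σ (flowAverage κ τ P) (κ t) = P (κ t) := by
  have outer_deriv := hasDerivAt_flowAverage κ hσ (flowAverage κ τ P)
  have inner_deriv := hasDerivAt_flowAverage κ hτ P
  have second_deriv := ((inner_deriv t).fun_sub (outer_deriv t)).fun_const_smul σ⁻¹
  rw [funext fun t => (outer_deriv t).deriv, second_deriv.deriv]
  match_scalars <;> field_simp <;> ring

end FlowAverage

theorem tendsto_apply_of_topologicalClosure_span_eq_top {α 𝕜 E F : Type*}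
    [NontriviallyNormedField 𝕜] [NormedAddCommGroup E] [NormedSpace 𝕜 E] [NormedAddCommGroup F]
    [NormedSpace 𝕜 F] {l : Filter α} {T : α → E →L[𝕜] F} {T₀ : E →L[𝕜] F} {C : ℝ≥0}
    (hC : ∀ a, ‖T a‖ ≤ C) {s : Set E} (hs : (Submodule.span 𝕜 s).topologicalClosure = ⊤)
    (h : ∀ x ∈ s, Tendsto (fun a => T a x) l (𝓝 (T₀ x))) (x : E) :
    Tendsto (fun a => T a x) l (𝓝 (T₀ x)) := by
  have equicontinuous : Equicontinuous fun a x => T a x :=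
    (LipschitzWith.uniformEquicontinuous _ C fun a =>
      (T a).lipschitzWith_of_opNorm_le (hC a)).equicontinuous
  have closed := equicontinuous.isClosed_setOfPred_tendsto (l := l) T₀.continuous
  have x_mem : x ∈ closure (Submodule.span 𝕜 s : Set E) := by
    rw [← Submodule.topologicalClosure_coe, hs]
    trivial
  refine closure_minimal (fun y hy => ?_) closed x_mem
  refine Submodule.span_induction h (by simpa using tendsto_const_nhds)
    (fun y z _ _ hy hz => ?_) (fun c y _ hy => ?_) hy
  · simpa only [Set.mem_ofPred_eq, map_add] using hy.add hz
  · simpa only [Set.mem_ofPred_eq, map_smul] using hy.const_smul c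

section TorusEquidistribution

open UnitAddTorus

variable {ι : Type*} [Fintype ι]

instance isProbabilityMeasure_volume_unitAddCircle :
    IsProbabilityMeasure (volume : Measure UnitAddCircle) :=
  ⟨UnitAddCircle.measure_univ⟩

theorem mFourier_apply_add (n : ι → ℤ) (x y : UnitAddTorus ι) :
    mFourier n (x + y) = mFourier n x * mFourier n y := by
  simp [mFourier, fourier_apply, AddCircle.toCircle_add, Finset.prod_mul_distrib]

theorem translationAverage_mFourier (μ : Measure (UnitAddTorus ι)) [IsProbabilityMeasure μ]
    (n : ι → ℤ) :
    translationAverage μ (mFourier n) = (∫ k, mFourier n k ∂μ) • mFourier n := by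
  ext x
  simp [translationAverage_apply, mFourier_apply_add, integral_const_mul, mul_comm]

theorem integral_mFourier_eq_zero {n : ι → ℤ} {k : UnitAddTorus ι} (hk : mFourier n k ≠ 1) :
    ∫ x, mFourier n x = 0 := by
  have invariance : mFourier n k * ∫ x, mFourier n x = ∫ x, mFourier n x := by
    rw [← integral_const_mul, ← integral_add_left_eq_self (mFourier n) k]
    simp only [mFourier_apply_add]
  exact (mul_left_eq_self₀.1 invariance).resolve_left hk

variable {α : Type*} {l : Filter α} {μ : α → Measure (UnitAddTorus ι)}
  [∀ a, IsProbabilityMeasure (μ a)] {ν : Measure (UnitAddTorus ι)} [IsProbabilityMeasure ν]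

theorem tendsto_translationAverage_complex
    (h : ∀ n, Tendsto (fun a => ∫ k, mFourier n k ∂μ a) l (𝓝 (∫ k, mFourier n k ∂ν)))
    (P : C(UnitAddTorus ι, ℂ)) :
    Tendsto (fun a => translationAverage (μ a) P) l (𝓝 (translationAverage ν P)) := by
  refine tendsto_apply_of_topologicalClosure_span_eq_top (C := 1)
    (fun a => by simpa using norm_translationAverage_le (μ a)) span_mFourier_closure_eq_top ?_ P
  rintro _ ⟨n, rfl⟩
  simpa only [translationAverage_mFourier] using (h n).smul_const (mFourier n)

theorem tendsto_translationAverage_real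
    (h : ∀ n, Tendsto (fun a => ∫ k, mFourier n k ∂μ a) l (𝓝 (∫ k, mFourier n k ∂ν)))
    (P : C(UnitAddTorus ι, ℝ)) :
    Tendsto (fun a => translationAverage (μ a) P) l (𝓝 (translationAverage ν P)) := by
  have re_translationAverage (μ : Measure (UnitAddTorus ι)) [IsProbabilityMeasure μ] :
      (Complex.reCLM : C(ℂ, ℝ)).comp
        (translationAverage μ ((Complex.ofRealCLM : C(ℝ, ℂ)).comp P)) = translationAverage μ P := by
    rw [← translationAverage_clm_comp]
    rfl
  simpa only [Function.comp_def, re_translationAverage] using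
    ((ContinuousMap.continuous_postcomp (Complex.reCLM : C(ℂ, ℝ))).tendsto _).comp
      (tendsto_translationAverage_complex h ((Complex.ofRealCLM : C(ℝ, ℂ)).comp P))

end TorusEquidistribution

section TorusCover

open UnitAddTorus
open scoped Pointwise

variable {ι : Type*}

variable (ι) in
/-- The covering of the torus by angles, each coordinate having period `2π`; the circles of
`UnitAddTorus` have length `1`. -/
noncomputable def torusCover : (ι → ℝ) →+ UnitAddTorus ι where
  toFun ψ i := (ψ i / (2 * Real.pi) : ℝ)
  map_zero' := by ext i; simp
  map_add' ψ φ := by ext i; simp [add_div]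

theorem torusCover_apply (ψ : ι → ℝ) (i : ι) :
    torusCover ι ψ i = ((ψ i / (2 * Real.pi) : ℝ) : UnitAddCircle) := rfl

theorem isOpenQuotientMap_torusCover : IsOpenQuotientMap (torusCover ι) := by
  have rescale : IsOpenQuotientMap fun x : ℝ => x / (2 * Real.pi) :=
    (Homeomorph.mulRight₀ (2 * Real.pi)⁻¹ (by positivity)).isOpenQuotientMap
  have coordinate : IsOpenQuotientMap fun x : ℝ => ((x / (2 * Real.pi) : ℝ) : UnitAddCircle) :=
    QuotientAddGroup.isOpenQuotientMap_mk.comp rescale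
  exact IsOpenQuotientMap.piMap fun _ : ι => coordinate

theorem torusCover_add_single [DecidableEq ι] (ψ : ι → ℝ) (i : ι) :
    torusCover ι (ψ + Pi.single i (2 * Real.pi)) = torusCover ι ψ := by
  suffices torusCover ι (Pi.single i (2 * Real.pi)) = 0 by rw [map_add, this, add_zero]
  ext j
  obtain rfl | hij := eq_or_ne j i <;>
    simp [torusCover_apply, AddCircle.coe_period, Real.pi_ne_zero, *]

/-- The one-parameter subgroup of the torus with frequency vector `ω`. -/
noncomputable def torusFlow (ω : ι → ℝ) : ℝ →ₜ+ UnitAddTorus ι where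
  toFun t := torusCover ι (t • ω)
  map_zero' := by simp
  map_add' s t := by simp [add_smul]
  continuous_toFun := isOpenQuotientMap_torusCover.continuous.comp (by fun_prop)

theorem torusFlow_apply (ω : ι → ℝ) (t : ℝ) : torusFlow ω t = torusCover ι (t • ω) := rfl

theorem exists_eq_add_sum_of_torusCover_eq [Fintype ι] [DecidableEq ι] {ψ φ : ι → ℝ}
    (h : torusCover ι ψ = torusCover ι φ) :
    ∃ n : ι → ℤ, ψ = φ + ∑ i, n i • Pi.single i (2 * Real.pi) := by
  have exists_int (i : ι) : ∃ n : ℤ, ψ i = φ i + n * (2 * Real.pi) := by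
    have coe_sub_eq_zero :
        ((ψ i / (2 * Real.pi) - φ i / (2 * Real.pi) : ℝ) : UnitAddCircle) = 0 := by
      rw [AddCircle.coe_sub, sub_eq_zero]
      exact congrFun h i
    obtain ⟨n, hn⟩ := AddCircle.coe_eq_zero_iff 1 |>.1 coe_sub_eq_zero
    refine ⟨n, ?_⟩
    rw [zsmul_one, ← sub_div, eq_div_iff (by positivity)] at hn
    linarith
  choose n hn using exists_int
  exact ⟨n, by ext i; simp [hn i, Pi.single_apply]⟩

theorem exists_comp_torusCover_eq [Finite ι] [DecidableEq ι] {f : (ι → ℝ) → ℝ} (hf : Continuous f)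
    (hper : ∀ i, Function.Periodic f (Pi.single i (2 * Real.pi))) :
    ∃ F : C(UnitAddTorus ι, ℝ), ∀ ψ, F (torusCover ι ψ) = f ψ := by
  cases nonempty_fintype ι
  have periodic_sum (n : ι → ℤ) : Function.Periodic f (∑ i, n i • Pi.single i (2 * Real.pi)) :=
    Finset.sum_induction _ (Function.Periodic f) (fun _ _ => .add_period) (by simp)
      fun i _ => (hper i).zsmul (n i)
  have factors : Function.FactorsThrough f (torusCover ι) := fun ψ φ h => by
    obtain ⟨n, rfl⟩ := exists_eq_add_sum_of_torusCover_eq h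
    exact periodic_sum n φ
  let cover : C(ι → ℝ, UnitAddTorus ι) := ⟨torusCover ι, isOpenQuotientMap_torusCover.continuous⟩
  have quotient : Topology.IsQuotientMap cover := isOpenQuotientMap_torusCover.isQuotientMap
  exact ⟨quotient.lift ⟨f, hf⟩ factors,
    fun ψ => DFunLike.congr_fun (quotient.lift_comp ⟨f, hf⟩ factors) ψ⟩

variable [Fintype ι]

theorem mFourier_torusFlow (ω : ι → ℝ) (n : ι → ℤ) (t : ℝ) :
    mFourier n (torusFlow ω t) = Complex.exp ((∑ i, ω i * n i : ℝ) * t * Complex.I) := by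
  simp only [mFourier, ContinuousMap.coe_mk, torusFlow_apply, torusCover_apply, fourier_coe_apply,
    ← Complex.exp_sum]
  push_cast
  rw [Finset.sum_mul, Finset.sum_mul]
  congr! 2 with i
  simp only [Pi.smul_apply, smul_eq_mul, Complex.ofReal_mul, div_one]
  field_simp

theorem measurePreserving_mk_Icc_unitAddTorus :
    MeasurePreserving (fun (y : ι → ℝ) i => (y i : UnitAddCircle))
      (volume.restrict (Set.Icc 0 1)) volume := by
  have Ioc_eq_Icc : volume.restrict (Set.univ.pi fun _ : ι => Set.Ioc (0 : ℝ) (0 + 1)) =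
      volume.restrict (Set.Icc 0 1) := by
    rw [zero_add]
    exact Measure.restrict_congr_set Measure.univ_pi_Ioc_ae_eq_Icc
  rw [← Ioc_eq_Icc, volume_pi, volume_pi, Measure.restrict_pi_pi]
  exact measurePreserving_pi _ _ fun _ => UnitAddCircle.measurePreserving_mk 0

theorem integral_torusCover (F : C(UnitAddTorus ι, ℝ)) :
    ((2 * Real.pi) ^ Fintype.card ι)⁻¹ * ∫ ψ in Set.Icc 0 fun _ => 2 * Real.pi, F (torusCover ι ψ) =
      ∫ x, F x := by
  have smul_Icc : (2 * Real.pi) • Set.Icc (0 : ι → ℝ) 1 = Set.Icc 0 fun _ => 2 * Real.pi := by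
    convert! (OrderIso.smulRight (β := ι → ℝ) Real.two_pi_pos).image_Icc 0 1
    · simp
    · simp
  have cover_smul (y : ι → ℝ) :
      torusCover ι ((2 * Real.pi) • y) = fun i => (y i : UnitAddCircle) := by
    ext i
    simp [torusCover_apply]
  rw [← smul_Icc, ← smul_eq_mul, ← Module.finrank_fintype_fun_eq_card ℝ,
    ← Measure.setIntegral_comp_smul_of_pos _ _ _ Real.two_pi_pos,
    ← measurePreserving_mk_Icc_unitAddTorus.map_eq, integral_map
      measurePreserving_mk_Icc_unitAddTorus.aemeasurable F.continuous.aestronglyMeasurable]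
  simp only [cover_smul]

end TorusCover

section TorusFlow

open UnitAddTorus ProbabilityTheory Bornology

variable {ι : Type*} [Fintype ι] {ω : ι → ℝ}

theorem tendsto_integral_mFourier_flowMeasure {n : ι → ℤ} (hn : ∑ i, ω i * n i ≠ 0) :
    Tendsto (fun τ => ∫ k, mFourier n k ∂flowMeasure (torusFlow ω) τ) (cobounded ℝ) (𝓝 0) := by
  have characteristic_function (τ : ℝ) : ∫ k, mFourier n k ∂flowMeasure (torusFlow ω) τ =
      (1 - ((-∑ i, ω i * n i) * τ : ℝ) * Complex.I)⁻¹ := by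
    rw [integral_flowMeasure, ← integral_cexp_expMeasure_one]
    refine integral_congr_ae (ae_of_all _ fun s => ?_)
    simp only [mFourier_torusFlow]
    push_cast
    ring_nf
  simp only [characteristic_function]
  exact tendsto_inv₀_cobounded.comp <| (tendsto_const_sub_cobounded 1).comp <|
    (tendsto_mul_right_cobounded Complex.I_ne_zero).comp <|
    (RCLike.tendsto_ofReal_cobounded_cobounded ℂ).comp <|
    tendsto_mul_left_cobounded (neg_ne_zero.2 hn)

theorem tendsto_flowAverage_torusFlow
    (hω : ∀ n : ι → ℤ, n ≠ 0 → ∑ i, ω i * n i ≠ 0) (P : C(UnitAddTorus ι, ℝ)) :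
    Tendsto (fun τ => flowAverage (torusFlow ω) τ P) (cobounded ℝ) (𝓝 (.const _ (∫ x, P x))) := by
  rw [← translationAverage_eq_const]
  refine tendsto_translationAverage_real (fun n => ?_) P
  obtain rfl | hn := eq_or_ne n 0
  · simp [mFourier_zero]
  · have mFourier_ne_one :
        mFourier n (torusFlow ω (Real.pi / ∑ i, ω i * n i)) ≠ 1 := by
      rw [mFourier_torusFlow, ← Complex.ofReal_mul, mul_div_cancel₀ _ (hω n hn),
        Complex.exp_pi_mul_I]
      norm_num
    rw [integral_mFourier_eq_zero mFourier_ne_one]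
    exact tendsto_integral_mFourier_flowMeasure (hω n hn)

end TorusFlow

section TimeScales

/-- The relaxation time of `ε y'' + y' + ε a y = 0` that tends to infinity as `ε → 0`. -/
noncomputable def slowTime (a ε : ℝ) : ℝ := (1 + √(1 - 4 * a * ε ^ 2)) / (2 * (a * ε))

/-- The relaxation time of `ε y'' + y' + ε a y = 0` that tends to zero as `ε → 0`. -/
noncomputable def fastTime (a ε : ℝ) : ℝ := (1 - √(1 - 4 * a * ε ^ 2)) / (2 * (a * ε))

variable {a ε : ℝ}

theorem fastTime_add_slowTime (a ε : ℝ) : fastTime a ε + slowTime a ε = (a * ε)⁻¹ := by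
  rw [fastTime, slowTime]
  ring

theorem fastTime_mul_slowTime (ha : a ≠ 0) (hε : ε ≠ 0) (h : 4 * a * ε ^ 2 ≤ 1) :
    fastTime a ε * slowTime a ε = a⁻¹ := by
  have sq_sqrt := Real.sq_sqrt (sub_nonneg.2 h)
  rw [fastTime, slowTime]
  field_simp
  linear_combination -sq_sqrt

theorem tendsto_slowTime (ha : a ≠ 0) :
    Tendsto (slowTime a) (𝓝[≠] 0) (Bornology.cobounded ℝ) := by
  have inv_slowTime : slowTime a = Inv.inv ∘ fun ε => 2 * (a * ε) / (1 + √(1 - 4 * a * ε ^ 2)) := by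
    ext ε
    simp [slowTime]
  have denominator_pos (ε : ℝ) : 0 < 1 + √(1 - 4 * a * ε ^ 2) := by positivity
  rw [inv_slowTime]
  refine tendsto_inv₀_nhdsNE_zero.comp (tendsto_nhdsWithin_iff.2 ⟨?_, ?_⟩)
  · refine (Continuous.tendsto' ?_ 0 0 (by simp)).mono_left nhdsWithin_le_nhds
    fun_prop (disch := intro ε; exact (denominator_pos ε).ne')
  · filter_upwards [self_mem_nhdsWithin] with ε hε
    exact div_ne_zero (mul_ne_zero two_ne_zero (mul_ne_zero ha hε)) (denominator_pos ε).ne'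

end TimeScales

section ResponseOperator

variable {K : Type*} [TopologicalSpace K] [AddCommGroup K] [MeasurableSpace K] [BorelSpace K]
  [CompactSpace K] [ContinuousAdd K]

/-- The solution operator `P ↦ u` of `ε u'' + u' + ε a u = ε P` along a one-parameter subgroup,
obtained by factoring the differential operator with its two relaxation times. -/
noncomputable def responseOperator (κ : ℝ →ₜ+ K) (a ε : ℝ) : C(K, ℝ) →L[ℝ] C(K, ℝ) :=
  a⁻¹ • (flowAverage κ (fastTime a ε)).comp (flowAverage κ (slowTime a ε))

variable (κ : ℝ →ₜ+ K)

theorem responseOperator_addTranslate (a ε : ℝ) (k : K) (P : C(K, ℝ)) :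
    responseOperator κ a ε (addTranslate k P) = addTranslate k (responseOperator κ a ε P) := by
  simp only [responseOperator, flowAverage, smul_apply,
    ContinuousLinearMap.comp_apply, translationAverage_addTranslate]
  rfl

theorem norm_responseOperator_apply_le (a ε : ℝ) (P : C(K, ℝ)) :
    ‖responseOperator κ a ε P‖ ≤ |a|⁻¹ * ‖flowAverage κ (slowTime a ε) P‖ := by
  rw [responseOperator, smul_apply, norm_smul, norm_inv, Real.norm_eq_abs]
  gcongr
  exact norm_translationAverage_apply_le _ _

theorem norm_responseOperator_le (a ε : ℝ) : ‖responseOperator κ a ε‖ ≤ |a|⁻¹ := by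
  refine ContinuousLinearMap.opNorm_le_bound _ (by positivity) fun P => ?_
  refine (norm_responseOperator_apply_le κ a ε P).trans ?_
  gcongr
  exact norm_translationAverage_apply_le _ P

theorem mul_deriv_deriv_responseOperator {a ε : ℝ} (ha : a ≠ 0) (hε : ε ≠ 0)
    (h : 4 * a * ε ^ 2 ≤ 1) (P : C(K, ℝ)) (t : ℝ) :
    ε * deriv (deriv fun t => responseOperator κ a ε P (κ t)) t
      + deriv (fun t => responseOperator κ a ε P (κ t)) t
      + ε * (a * responseOperator κ a ε P (κ t)) = ε * P (κ t) := by
  have times_ne_zero : fastTime a ε * slowTime a ε ≠ 0 := by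
    rw [fastTime_mul_slowTime ha hε h]
    exact inv_ne_zero ha
  have factored_equation := smul_deriv_deriv_flowAverage_flowAverage κ
    (left_ne_zero_of_mul times_ne_zero) (right_ne_zero_of_mul times_ne_zero) P t
  rw [fastTime_mul_slowTime ha hε h, fastTime_add_slowTime] at factored_equation
  simp only [responseOperator, smul_apply, ContinuousLinearMap.comp_apply,
    ContinuousMap.smul_apply, smul_eq_mul, deriv_const_mul_field'] at factored_equation ⊢
  rw [← factored_equation]
  field_simp

end ResponseOperator

section AnalyticSolution

variable {𝕜 E K : Type*} [RCLike 𝕜] [NormedAddCommGroup E] [NormedSpace 𝕜 E] [TopologicalSpace K]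
  [CompactSpace K] [AddGroup K] [ContinuousAdd K] {q : E →+ K}

theorem analyticAt_clm_comp_of_equivariant (hq : IsOpenQuotientMap q)
    {T : C(K, 𝕜) →L[𝕜] C(K, 𝕜)} (hT : ∀ k v, T (addTranslate k v) = addTranslate k (T v))
    {u : C(K, 𝕜)} (hu : ∀ x, AnalyticAt 𝕜 (fun y => u (q y)) x) (x : E) :
    AnalyticAt 𝕜 (fun y => T u (q y)) x := by
  refine analyticAt_comp_of_analyticAt_addTranslate ?_ x
  simp only [← hT]
  exact (T.analyticAt _).comp (analyticAt_addTranslate hq hu)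

theorem exists_analytic_add_clm_eq (hq : IsOpenQuotientMap q)
    {T : C(K, 𝕜) →L[𝕜] C(K, 𝕜)} (hT : ∀ k v, T (addTranslate k v) = addTranslate k (T v))
    {N : C(K, 𝕜) → C(K, 𝕜)} (hN : ∀ k v, N (addTranslate k v) = addTranslate k (N v))
    (hN₀ : N 0 = 0) {η : ℝ≥0} {ρ : ℝ} (hη : ‖T‖₊ * η ≤ 2⁻¹)
    (hNη : LipschitzOnWith η N (Metric.closedBall 0 ρ))
    (hNa : ∀ u ∈ Metric.closedBall 0 ρ, AnalyticAt 𝕜 N u) {F : C(K, 𝕜)}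
    (hF : ∀ x, AnalyticAt 𝕜 (fun y => F (q y)) x) (hTF : 2 * ‖T F‖ < ρ) :
    ∃ u, ‖u‖ ≤ 2 * ‖T F‖ ∧ u + T (N u) = T F ∧ ∀ x, AnalyticAt 𝕜 (fun y => u (q y)) x := by
  have half_lt_one : (2⁻¹ : ℝ≥0) < 1 := inv_lt_one_of_one_lt₀ one_lt_two
  have lipschitz : LipschitzOnWith 2⁻¹ (fun u => T (N u)) (Metric.closedBall 0 ρ) :=
    (T.lipschitz.comp_lipschitzOnWith hNη).weaken hη
  obtain ⟨u, norm_u, hu⟩ := exists_add_eq_of_lipschitzOnWith half_lt_one lipschitz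
    (by simp [hN₀]) (b := T F) (by push_cast; linarith)
  have norm_u_le : ‖u‖ ≤ 2 * ‖T F‖ := norm_u.trans_eq (by push_cast; ring)
  have ball_mem : Metric.closedBall 0 ρ ∈ 𝓝 u :=
    Metric.closedBall_mem_nhds_of_mem (mem_ball_zero_iff.2 (norm_u_le.trans_lt hTF))
  have analytic : AnalyticAt 𝕜 (fun u => T (N u)) u :=
    (T.analyticAt _).comp (hNa u (mem_of_mem_nhds ball_mem))
  obtain ⟨e, he⟩ := exists_hasFDerivAt_equiv_of_lipschitzOnWith half_lt_one lipschitz ball_mem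
    analytic.differentiableAt
  refine ⟨u, norm_u_le, hu, fun x => ?_⟩
  refine analyticAt_comp_of_equivariant (Φ := fun v => v + T (N v)) hq (fun k v => ?_)
    (analyticAt_id.fun_add analytic) he ?_ x
  · simp only [hN, hT]
    rfl
  · simpa only [hu] using analyticAt_clm_comp_of_equivariant hq hT hF

end AnalyticSolution

theorem exists_continuousMap_eventuallyEq_of_analyticAt {g : ℝ → ℝ} {c : ℝ}
    (hg : AnalyticAt ℝ g c) : ∃ G : C(ℝ, ℝ), G =ᶠ[𝓝 c] g := by
  obtain ⟨δ, δ_pos, hδ⟩ := Metric.nhds_basis_closedBall.eventually_iff.1 hg.eventually_analyticAt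
  have le : c - δ ≤ c + δ := by linarith
  rw [Real.closedBall_eq_Icc] at hδ
  have continuousOn : ContinuousOn g (Set.Icc (c - δ) (c + δ)) := fun x hx =>
    (hδ hx).continuousAt.continuousWithinAt
  refine ⟨⟨Set.IccExtend le ((Set.Icc (c - δ) (c + δ)).domRestrict g),
    continuousOn.domRestrict.Icc_extend'⟩, ?_⟩
  filter_upwards [Icc_mem_nhds (sub_lt_self c δ_pos) (lt_add_of_pos_right c δ_pos)] with x hx
  exact Set.IccExtend_of_mem le (Set.domRestrict _ g) hx

section Response

variable {E K : Type*} [NormedAddCommGroup E] [NormedSpace ℝ E] [TopologicalSpace K]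
  [CompactSpace K] [AddCommGroup K] [ContinuousAdd K] [MeasurableSpace K] [BorelSpace K]
  {q : E →+ K} {κ : ℝ →ₜ+ K} {c : ℝ} {F : C(K, ℝ)}

theorem tendsto_responseOperator_sub_const {a : ℝ} (ha : a ≠ 0)
    (hF : Tendsto (fun τ => flowAverage κ τ F) (Bornology.cobounded ℝ) (𝓝 (.const K c))) :
    Tendsto (fun ε => responseOperator κ a ε (F - .const K c)) (𝓝[≠] 0) (𝓝 0) := by
  have flowAverage_sub : Tendsto (fun τ => flowAverage κ τ (F - .const K c))
      (Bornology.cobounded ℝ) (𝓝 0) := by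
    simpa [flowAverage, translationAverage_const] using hF.sub_const (.const K c)
  have bound : Tendsto (fun ε => |a|⁻¹ * ‖flowAverage κ (slowTime a ε) (F - .const K c)‖)
      (𝓝[≠] 0) (𝓝 0) := by
    simpa using (flowAverage_sub.comp (tendsto_slowTime ha)).norm.const_mul |a|⁻¹
  exact squeeze_zero_norm (fun ε => norm_responseOperator_apply_le κ a ε _) bound

theorem mul_deriv_deriv_of_add_responseOperator_eq {g : C(ℝ, ℝ)} {ε : ℝ} (ha : deriv g c ≠ 0)
    (hε : ε ≠ 0) (h : 4 * deriv g c * ε ^ 2 ≤ 1) {u : C(K, ℝ)}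
    (hu : u + responseOperator κ (deriv g c) ε (nonlinearRemainder g c u) =
      responseOperator κ (deriv g c) ε (F - .const K (g c))) (t : ℝ) :
    ε * deriv (deriv fun s => c + u (κ s)) t + deriv (fun s => c + u (κ s)) t
      + ε * g (c + u (κ t)) = ε * F (κ t) := by
  have u_eq : u = responseOperator κ (deriv g c) ε
      (F - .const K (g c) - nonlinearRemainder g c u) := by
    rw [map_sub, ← hu, add_sub_cancel_right]
  have linear_equation := mul_deriv_deriv_responseOperator κ ha hε h
    (F - .const K (g c) - nonlinearRemainder g c u) t
  rw [← u_eq] at linear_equation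
  simp only [deriv_const_add', ContinuousMap.sub_apply, ContinuousMap.const_apply,
    nonlinearRemainder_apply] at linear_equation ⊢
  linear_combination linear_equation

theorem eventually_exists_response {g : C(ℝ, ℝ)} (hq : IsOpenQuotientMap q)
    (hFa : ∀ x, AnalyticAt ℝ (fun y => F (q y)) x) (hg : AnalyticAt ℝ g c)
    (hg' : deriv g c ≠ 0)
    (hF : Tendsto (fun τ => flowAverage κ τ F) (Bornology.cobounded ℝ) (𝓝 (.const K (g c)))) :
    ∀ᶠ ε in 𝓝[≠] 0, ∃ u : C(K, ℝ),
      ‖u‖ ≤ 2 * ‖responseOperator κ (deriv g c) ε (F - .const K (g c))‖ ∧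
      (∀ x, AnalyticAt ℝ (fun y => u (q y)) x) ∧
      ∀ t, ε * deriv (deriv fun s => c + u (κ s)) t + deriv (fun s => c + u (κ s)) t
        + ε * g (c + u (κ t)) = ε * F (κ t) := by
  obtain ⟨ρ, ρ_pos, lipschitz, analytic⟩ := exists_lipschitzOnWith_nonlinearRemainder (K := K) hg
    (η := 2⁻¹ * ‖deriv g c‖₊) (mul_pos (by positivity) (nnnorm_pos.2 hg'))
  have forcing_small :=
    ((tendsto_responseOperator_sub_const hg' hF).norm.const_mul 2).eventually_lt_const
      (by simpa using ρ_pos)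
  have overdamped : ∀ᶠ ε in 𝓝[≠] (0 : ℝ), 4 * deriv g c * ε ^ 2 < 1 :=
    ((Continuous.tendsto' (by fun_prop) 0 0 (by simp)).eventually_lt_const one_pos).filter_mono
      nhdsWithin_le_nhds
  filter_upwards [forcing_small, overdamped, self_mem_nhdsWithin] with ε small damped hε
  have contraction : ‖responseOperator κ (deriv g c) ε‖₊ * (2⁻¹ * ‖deriv g c‖₊) ≤ 2⁻¹ := by
    have norm_mul_le : ‖responseOperator κ (deriv g c) ε‖₊ * ‖deriv g c‖₊ ≤ 1 :=
      (le_div_iff₀ (nnnorm_pos.2 hg')).1 <| NNReal.coe_le_coe.1 <| by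
        simpa using norm_responseOperator_le κ (deriv g c) ε
    calc _ = 2⁻¹ * (‖responseOperator κ (deriv g c) ε‖₊ * ‖deriv g c‖₊) := by ring
      _ ≤ 2⁻¹ := mul_le_of_le_one_right' norm_mul_le
  obtain ⟨u, norm_u, hu, u_analytic⟩ := exists_analytic_add_clm_eq hq
    (responseOperator_addTranslate κ (deriv g c) ε) (nonlinearRemainder_addTranslate g c)
    (nonlinearRemainder_zero g c) contraction lipschitz analytic
    (fun x => (hFa x).sub analyticAt_const) small
  exact ⟨u, norm_u, u_analytic, mul_deriv_deriv_of_add_responseOperator_eq hg' hε damped.le hu⟩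

theorem exists_tendsto_zero_response {g : ℝ → ℝ} (hq : IsOpenQuotientMap q)
    (hFa : ∀ x, AnalyticAt ℝ (fun y => F (q y)) x) (hg : AnalyticAt ℝ g c)
    (hg' : deriv g c ≠ 0)
    (hF : Tendsto (fun τ => flowAverage κ τ F) (Bornology.cobounded ℝ) (𝓝 (.const K (g c)))) :
    ∃ u : ℝ → C(K, ℝ), Tendsto u (𝓝[≠] 0) (𝓝 0) ∧ ∀ᶠ ε in 𝓝[≠] 0,
      (∀ x, AnalyticAt ℝ (fun y => u ε (q y)) x) ∧
      ∀ t, ε * deriv (deriv fun s => c + u ε (κ s)) t + deriv (fun s => c + u ε (κ s)) t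
        + ε * g (c + u ε (κ t)) = ε * F (κ t) := by
  obtain ⟨G, hG⟩ := exists_continuousMap_eventuallyEq_of_analyticAt hg
  rw [← hG.deriv_eq] at hg'
  rw [← hG.self_of_nhds] at hF
  obtain ⟨u, hu⟩ := (eventually_exists_response hq hFa (hg.congr hG.symm) hg' hF).choice
  have u_tendsto : Tendsto u (𝓝[≠] 0) (𝓝 0) := by
    refine squeeze_zero_norm' (hu.mono fun ε hε => hε.1) ?_
    simpa using (tendsto_responseOperator_sub_const hg' hF).norm.const_mul 2
  obtain ⟨δ, δ_pos, hδ⟩ := Metric.eventually_nhds_iff.1 hG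
  refine ⟨u, u_tendsto, ?_⟩
  filter_upwards [hu, u_tendsto.norm.eventually_lt_const (by simpa using δ_pos)]
    with ε ⟨_, analytic, equation⟩ norm_lt
  refine ⟨analytic, fun t => ?_⟩
  rw [← hδ (by simpa using ((u ε).norm_coe_le_norm (κ t)).trans_lt norm_lt)]
  exact equation t

end Response

theorem response_solution_exists_general {ι : Type*} [Fintype ι] [DecidableEq ι] (ω : ι → ℝ)
    (hω : ∀ ν : ι → ℤ, ν ≠ 0 → (∑ i, ω i * (ν i : ℝ)) ≠ 0) (f : (ι → ℝ) → ℝ) (g : ℝ → ℝ)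
    (hf : ∀ ψ, AnalyticAt ℝ f ψ) (hfper : ∀ ψ i, f (ψ + Pi.single i (2 * Real.pi)) = f ψ)
    (c₀ : ℝ) (hg : AnalyticAt ℝ g c₀)
    (hzero : g c₀ = ((2 * Real.pi) ^ Fintype.card ι)⁻¹ *
      ∫ ψ in Set.Icc (0 : ι → ℝ) (fun _ => 2 * Real.pi), f ψ) (hsimple : deriv g c₀ ≠ 0) :
    ∃ ε₀ > (0 : ℝ), ∃ X : ℝ → (ι → ℝ) → ℝ,
      (∀ ε : ℝ, 0 < |ε| → |ε| < ε₀ →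
        (∀ ψ, AnalyticAt ℝ (X ε) ψ) ∧
        (∀ ψ i, X ε (ψ + Pi.single i (2 * Real.pi)) = X ε ψ) ∧
        (∀ t : ℝ,
          ε * deriv (deriv (fun s : ℝ => c₀ + X ε (s • ω))) t
            + deriv (fun s : ℝ => c₀ + X ε (s • ω)) t
            + ε * g (c₀ + X ε (t • ω))
            = ε * f (t • ω))) ∧
      TendstoUniformly X 0 (𝓝[≠] 0) := by
  have f_continuous : Continuous f :=
    continuous_iff_continuousAt.2 fun ψ => (hf ψ).continuousAt
  obtain ⟨F, hF⟩ := exists_comp_torusCover_eq f_continuous fun i ψ => hfper ψ i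
  have mean_eq : g c₀ = ∫ x, F x := by simp only [hzero, ← integral_torusCover, hF]
  have equidistributed := tendsto_flowAverage_torusFlow hω F
  rw [← mean_eq] at equidistributed
  obtain ⟨u, u_tendsto, hu⟩ := exists_tendsto_zero_response isOpenQuotientMap_torusCover
    (by simpa only [hF] using hf) hg hsimple equidistributed
  obtain ⟨ε₀, ε₀_pos, hε₀⟩ := Metric.eventually_nhds_iff.1 (eventually_nhdsWithin_iff.1 hu)
  refine ⟨ε₀, ε₀_pos, fun ε ψ => u ε (torusCover ι ψ), fun ε ε_pos ε_lt => ?_,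
    (ContinuousMap.tendsto_iff_tendstoUniformly.1 u_tendsto).comp (torusCover ι)⟩
  obtain ⟨analytic, equation⟩ := hε₀ (by simpa using ε_lt) (abs_pos.1 ε_pos)
  refine ⟨analytic, fun ψ i => congrArg (u ε) (torusCover_add_single ψ i), fun t => ?_⟩
  simpa only [torusFlow_apply, hF] using equation t

/-- **Existence of response solutions for arbitrary frequency vectors.**
Let `d ≥ 1`, let `ω ∈ ℝ^d` be nonresonant, let `f : ℝ^d → ℝ` be real analytic and
`2π`-periodic in each coordinate with mean value `f₀`, let `g : ℝ → ℝ` be real analytic,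
and let `c₀` be a simple zero of `g - f₀`.  Then there is `ε₀ > 0` such that for all
`0 < |ε| < ε₀` there is a real analytic, `2π`-periodic (in each coordinate) function
`X ε` with `x(t) = c₀ + X ε (t • ω)` solving `ε x'' + x' + ε g(x) = ε f(ωt)`,
and `sup |X ε| → 0` as `ε → 0`. -/
theorem response_solution_exists
    (d : ℕ) (hd : 1 ≤ d) (ω : Fin d → ℝ)
    (hω : ∀ ν : Fin d → ℤ, ν ≠ 0 → (∑ i, ω i * (ν i : ℝ)) ≠ 0)
    (f : (Fin d → ℝ) → ℝ) (g : ℝ → ℝ)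
    (hf : ∀ ψ : Fin d → ℝ, AnalyticAt ℝ f ψ)
    (hfper : ∀ (ψ : Fin d → ℝ) (i : Fin d), f (ψ + Pi.single i (2 * Real.pi)) = f ψ)
    (hg : ∀ x : ℝ, AnalyticAt ℝ g x)
    (f₀ : ℝ)
    (hf₀ : f₀ = ((2 * Real.pi) ^ d)⁻¹ *
      ∫ ψ in Set.Icc (0 : Fin d → ℝ) (fun _ => 2 * Real.pi), f ψ)
    (c₀ : ℝ) (hzero : g c₀ = f₀) (hsimple : deriv g c₀ ≠ 0) :
    ∃ ε₀ > (0 : ℝ), ∃ X : ℝ → (Fin d → ℝ) → ℝ,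
      (∀ ε : ℝ, 0 < |ε| → |ε| < ε₀ →
        (∀ ψ : Fin d → ℝ, AnalyticAt ℝ (X ε) ψ) ∧
        (∀ (ψ : Fin d → ℝ) (i : Fin d), X ε (ψ + Pi.single i (2 * Real.pi)) = X ε ψ) ∧
        (∀ t : ℝ,
          ε * deriv (deriv (fun s : ℝ => c₀ + X ε (s • ω))) t
            + deriv (fun s : ℝ => c₀ + X ε (s • ω)) t
            + ε * g (c₀ + X ε (t • ω))
            = ε * f (t • ω))) ∧
      TendstoUniformly X 0 (nhdsWithin (0 : ℝ) {0}ᶜ) := by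
  subst hf₀
  exact response_solution_exists_general ω hω f g hf hfper c₀ (hg c₀)
    (by rwa [Fintype.card_fin]) hsimple
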